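/- For each n, let Q_n be an n×n symmetric matrix with zero diagonal and let X ~ P_{β_1,Q_n} be an Ising random vector whose squared sample mean satisfies X̄_n² → m_1² in probability for some constant m_1 ∈ [0,1). Let Y ~ P_{β_2,Q^{CW}} be a Curie–Weiss Ising vector with β_2 ≥ 0, independent of X. Then (1/n) Σ_{i=1}^n (X_i − X̄_n)² → 1 − m_1² in probability, and √n · T_n converges in distribution to N(0, (1−m_1²)(1−m(β_2)²)). -/

import Mathlib

open MeasureTheory ProbabilityTheory Filter Topology Matrix

noncomputable section

/-- The `±1` configuration associated to a boolean configuration. -/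
def pmVec {ι : Type*} (s : ι → Bool) : ι → ℝ := fun i => if s i then 1 else -1

/-- Unnormalized Ising weight `exp((β/2) zᵀ Q z)`. -/
def isingWeight {ι : Type*} [Fintype ι] (β : ℝ) (Q : Matrix ι ι ℝ) (z : ι → ℝ) : ℝ :=
  Real.exp (β / 2 * (z ⬝ᵥ Q.mulVec z))

/-- Ising partition function `Z(β,Q)`. -/
def isingZ (ι : Type*) [Fintype ι] [DecidableEq ι] (β : ℝ) (Q : Matrix ι ι ℝ) : ℝ :=
  ∑ s : ι → Bool, isingWeight β Q (pmVec s)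

/-- The Ising probability measure `P_{β,Q}` on `{±1}^ι ⊆ ℝ^ι`:
`P(z) = exp((β/2) zᵀQz) / Z(β,Q)`. -/
def isingMeasure (ι : Type*) [Fintype ι] [DecidableEq ι] (β : ℝ) (Q : Matrix ι ι ℝ) :
    Measure (ι → ℝ) :=
  ∑ s : ι → Bool,
    ENNReal.ofReal (isingWeight β Q (pmVec s) / isingZ ι β Q) • Measure.dirac (pmVec s)

/-- Sample mean `X̄ = (1/n) Σ_i X_i`. -/
def sampleMean {ι : Type*} [Fintype ι] (x : ι → ℝ) : ℝ := (∑ i, x i) / (Fintype.card ι : ℝ)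

/-- Sample covariance `T_n = (1/n) Σ_i (X_i - X̄)(Y_i - Ȳ)`. -/
def sampleCov {ι : Type*} [Fintype ι] (x y : ι → ℝ) : ℝ :=
  (∑ i, (x i - sampleMean x) * (y i - sampleMean y)) / (Fintype.card ι : ℝ)

/-- Convergence in distribution: weak convergence of the laws, tested against
bounded continuous functions. -/
def TendstoInDistribution (μ : ℕ → Measure ℝ) (ν : Measure ℝ) : Prop :=
  ∀ f : BoundedContinuousFunction ℝ ℝ,
    Tendsto (fun n => ∫ x, f x ∂(μ n)) atTop (𝓝 (∫ x, f x ∂ν))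

/-- The Curie–Weiss interaction matrix `Q^{CW} = (1/n)(11ᵀ - I)`. -/
def QCW (n : ℕ) : Matrix (Fin n) (Fin n) ℝ := fun i j => if i = j then 0 else (n : ℝ)⁻¹

/-- `m(β)`: equal to `0` for `β ≤ 1`, and to the unique positive root of
`m = tanh(β m)` for `β > 1`. -/
def isingMag (β : ℝ) : ℝ := sSup {m : ℝ | 0 ≤ m ∧ m = Real.tanh (β * m)}


/-- Convergence in probability to a constant, for a sequence of laws on `ℝ`. -/
def TendstoInProbability (μ : ℕ → Measure ℝ) (c : ℝ) : Prop :=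
  ∀ ε : ℝ, 0 < ε → Tendsto (fun n => μ n {x | ε ≤ |x - c|}) atTop (𝓝 0)

/-!
Conditionally on a real random field `h`, the Curie–Weiss spins are i.i.d. with mean `tanh h`
(Hubbard–Stratonovich). Given `X` and `h`, the variable `√n * Tₙ` is therefore a linear form in
i.i.d. signs whose coefficients sum to zero, so that the conditional mean `tanh h` cancels and its
characteristic function at `u` is `exp (-u² (1 - tanh² h) Var X / 2)` up to a third-moment error of
order `n ^ (-1/2)`, where `Var X` is the empirical variance of `X`. By Laplace's method `|h|`
concentrates at `β m(β)`, whence `tanh² h → m(β)²` in probability. Only `|h|` has a limit for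
`β > 1`, but the variance depends on `h` through `tanh² h` alone.
-/

/-! ### Characteristic functions of sign variables -/

/-- The characteristic function at `x` of a `±1`-valued random variable of mean `θ`. -/
def signCharFun (θ x : ℝ) : ℂ :=
  (1 + θ) / 2 * Complex.exp (x * Complex.I) + (1 - θ) / 2 * Complex.exp (-(x * Complex.I))

lemma signCharFun_zero (θ : ℝ) : signCharFun θ 0 = 1 := by
  simp only [signCharFun, Complex.ofReal_zero, zero_mul, neg_zero, Complex.exp_zero]
  ring

lemma norm_prod_sub_prod_le {ι R : Type*} [NormedCommRing R] [NormOneClass R]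
    (s : Finset ι) {a b : ι → R} (ha : ∀ i ∈ s, ‖a i‖ ≤ 1) (hb : ∀ i ∈ s, ‖b i‖ ≤ 1) :
    ‖∏ i ∈ s, a i - ∏ i ∈ s, b i‖ ≤ ∑ i ∈ s, ‖a i - b i‖ := by
  classical
  induction s using Finset.induction_on with
  | empty => simp
  | insert j s hj ih =>
    rw [Finset.forall_mem_insert] at ha hb
    have hprod : ‖∏ i ∈ s, b i‖ ≤ 1 :=
      (s.norm_prod_le b).trans (Finset.prod_le_one (fun _ _ => norm_nonneg _) hb.2)
    rw [Finset.prod_insert hj, Finset.prod_insert hj, Finset.sum_insert hj]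
    calc ‖a j * ∏ i ∈ s, a i - b j * ∏ i ∈ s, b i‖
        = ‖(a j - b j) * ∏ i ∈ s, b i + a j * (∏ i ∈ s, a i - ∏ i ∈ s, b i)‖ := by ring_nf
      _ ≤ ‖a j - b j‖ * ‖∏ i ∈ s, b i‖ + ‖a j‖ * ‖∏ i ∈ s, a i - ∏ i ∈ s, b i‖ :=
        (norm_add_le _ _).trans (add_le_add (norm_mul_le _ _) (norm_mul_le _ _))
      _ ≤ ‖a j - b j‖ + ∑ i ∈ s, ‖a i - b i‖ :=
        add_le_add (mul_le_of_le_one_right (norm_nonneg _) hprod)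
          ((mul_le_of_le_one_left (norm_nonneg _) ha.1).trans (ih ha.2 hb.2))

lemma norm_cexp_sub_quadratic_le {z : ℂ} (hz : ‖z‖ ≤ 2) :
    ‖Complex.exp z - (1 + z + z ^ 2 / 2)‖ ≤ ‖z‖ ^ 3 / 3 := by
  have h := Complex.exp_bound' (x := z) (n := 3) (by norm_num; linarith)
  simp only [Finset.sum_range_succ, Finset.sum_range_zero, Nat.factorial] at h
  norm_num at h
  exact h.trans_eq (by ring)

lemma norm_convexCombination_le {θ r : ℝ} (hθ : |θ| ≤ 1) {a b : ℂ} (ha : ‖a‖ ≤ r)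
    (hb : ‖b‖ ≤ r) : ‖(1 + θ) / 2 * a + (1 - θ) / 2 * b‖ ≤ r := by
  obtain ⟨hθ₁, hθ₂⟩ := abs_le.1 hθ
  have h : (1 + θ) / 2 * a + (1 - θ) / 2 * b = ((1 + θ) / 2) • a + ((1 - θ) / 2) • b := by
    simp only [Complex.real_smul]
    push_cast
    rfl
  rw [h, ← mem_closedBall_zero_iff]
  exact convex_closedBall (0 : ℂ) r (mem_closedBall_zero_iff.2 ha) (mem_closedBall_zero_iff.2 hb)
    (by linarith) (by linarith) (by ring)

lemma norm_signCharFun_le_one {θ : ℝ} (hθ : |θ| ≤ 1) (x : ℝ) : ‖signCharFun θ x‖ ≤ 1 :=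
  norm_convexCombination_le hθ (Complex.norm_exp_ofReal_mul_I x).le
    (by rw [← neg_mul, ← Complex.ofReal_neg, Complex.norm_exp_ofReal_mul_I])

lemma norm_signCharFun_sub_quadratic_le {θ x : ℝ} (hθ : |θ| ≤ 1) (hx : |x| ≤ 1) :
    ‖signCharFun θ x - (1 + θ * x * Complex.I - x ^ 2 / 2)‖ ≤ |x| ^ 3 / 3 := by
  have hnorm : ‖(x : ℂ) * Complex.I‖ = |x| := by simp
  have hpos := norm_cexp_sub_quadratic_le (z := x * Complex.I) (by rw [hnorm]; linarith)
  have hneg := norm_cexp_sub_quadratic_le (z := -(x * Complex.I))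
    (by rw [norm_neg, hnorm]; linarith)
  rw [hnorm] at hpos
  rw [norm_neg, hnorm] at hneg
  convert norm_convexCombination_le hθ hpos hneg using 2
  rw [signCharFun]
  linear_combination ((x : ℂ) ^ 2 / 2) * Complex.I_sq

lemma norm_cexp_gaussian_sub_quadratic_le {θ x : ℝ} (hθ : |θ| ≤ 1) (hx : |x| ≤ 1) :
    ‖Complex.exp (θ * x * Complex.I - (1 - θ ^ 2) * x ^ 2 / 2)
        - (1 + θ * x * Complex.I - x ^ 2 / 2)‖ ≤ 2 * |x| ^ 3 := by
  set w : ℂ := θ * x * Complex.I - (1 - θ ^ 2) * x ^ 2 / 2 with hw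
  set r : ℝ := |x| with hr
  have hr₀ : 0 ≤ r := abs_nonneg x
  have hθ₁ : |1 - θ ^ 2| ≤ 1 := by
    rw [abs_le]; constructor <;> nlinarith [sq_nonneg θ, (sq_le_one_iff_abs_le_one θ).2 hθ]
  have hθ₂ : ‖(1 : ℂ) - θ ^ 2‖ ≤ 1 := by exact_mod_cast hθ₁
  have hwr : ‖w‖ ≤ 3 / 2 * r := by
    refine (norm_sub_le _ _).trans ?_
    simp only [norm_mul, norm_div, norm_pow, Complex.norm_real, Complex.norm_I, Real.norm_eq_abs,
      Complex.norm_ofNat, mul_one, ← hr]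
    nlinarith [mul_le_mul_of_nonneg_right hθ hr₀, mul_le_mul_of_nonneg_right hθ₂ (sq_nonneg r)]
  have hcubic : ‖1 + w + w ^ 2 / 2 - (1 + θ * x * Complex.I - x ^ 2 / 2)‖
      ≤ r ^ 3 / 2 + r ^ 4 / 8 := by
    have hexpand : 1 + w + w ^ 2 / 2 - (1 + θ * x * Complex.I - x ^ 2 / 2)
        = (1 - θ ^ 2) ^ 2 * x ^ 4 / 8 - θ * (1 - θ ^ 2) * x ^ 3 / 2 * Complex.I := by
      rw [hw]
      linear_combination ((θ : ℂ) ^ 2 * x ^ 2 / 2) * Complex.I_sq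
    rw [hexpand]
    refine (norm_sub_le _ _).trans ?_
    simp only [norm_mul, norm_div, norm_pow, Complex.norm_real, Complex.norm_I, Real.norm_eq_abs,
      Complex.norm_ofNat, mul_one, ← hr]
    have hsq : ‖(1 : ℂ) - θ ^ 2‖ ^ 2 ≤ 1 := pow_le_one₀ (norm_nonneg _) hθ₂
    have hmul : |θ| * ‖(1 : ℂ) - θ ^ 2‖ ≤ 1 := mul_le_one₀ hθ (norm_nonneg _) hθ₂
    linarith [mul_le_mul_of_nonneg_right hsq (pow_nonneg hr₀ 4),
      mul_le_mul_of_nonneg_right hmul (pow_nonneg hr₀ 3)]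
  have hexp : ‖Complex.exp w - (1 + w + w ^ 2 / 2)‖ ≤ (3 / 2 * r) ^ 3 / 3 :=
    (norm_cexp_sub_quadratic_le (by linarith)).trans (by gcongr)
  refine (norm_sub_le_norm_sub_add_norm_sub _ (1 + w + w ^ 2 / 2) _).trans ?_
  nlinarith [pow_nonneg hr₀ 3, mul_le_mul_of_nonneg_left hx (pow_nonneg hr₀ 3)]

lemma norm_cexp_gaussian_le_one {θ : ℝ} (hθ : |θ| ≤ 1) (x : ℝ) :
    ‖Complex.exp (θ * x * Complex.I - (1 - θ ^ 2) * x ^ 2 / 2)‖ ≤ 1 := by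
  have hre : (θ * x * Complex.I - (1 - θ ^ 2) * x ^ 2 / 2 : ℂ).re
      = -((1 - θ ^ 2) * x ^ 2 / 2) := by
    simp [← Complex.ofReal_mul, ← Complex.ofReal_pow]
  rw [Complex.norm_exp, Real.exp_le_one_iff, hre]
  have := (sq_le_one_iff_abs_le_one θ).2 hθ
  nlinarith [sq_nonneg x]

lemma norm_signCharFun_sub_cexp_le {θ : ℝ} (hθ : |θ| ≤ 1) (x : ℝ) :
    ‖signCharFun θ x - Complex.exp (θ * x * Complex.I - (1 - θ ^ 2) * x ^ 2 / 2)‖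
      ≤ 3 * |x| ^ 3 := by
  rcases le_total |x| 1 with hx | hx
  · rw [← sub_sub_sub_cancel_right _ _ (1 + θ * x * Complex.I - (x : ℂ) ^ 2 / 2)]
    refine (norm_sub_le _ _).trans ((add_le_add (norm_signCharFun_sub_quadratic_le hθ hx)
      (norm_cexp_gaussian_sub_quadratic_le hθ hx)).trans ?_)
    linarith [pow_nonneg (abs_nonneg x) 3]
  · refine (norm_sub_le _ _).trans ((add_le_add (norm_signCharFun_le_one hθ x)
      (norm_cexp_gaussian_le_one hθ x)).trans ?_)
    linarith [one_le_pow₀ hx (n := 3)]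

lemma norm_prod_signCharFun_sub_exp_le {ι : Type*} [Fintype ι] {θ : ℝ} (hθ : |θ| ≤ 1)
    {d : ι → ℝ} (hd : ∑ i, d i = 0) :
    ‖∏ i, signCharFun θ (d i) - (Real.exp (-((1 - θ ^ 2) * (∑ i, d i ^ 2) / 2)) : ℂ)‖
      ≤ 3 * ∑ i, |d i| ^ 3 := by
  have hprod : (Real.exp (-((1 - θ ^ 2) * (∑ i, d i ^ 2) / 2)) : ℂ)
      = ∏ i, Complex.exp (θ * d i * Complex.I - (1 - θ ^ 2) * d i ^ 2 / 2) := by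
    have hd' : ∑ i, (d i : ℂ) = 0 := by exact_mod_cast congrArg Complex.ofReal hd
    rw [← Complex.exp_sum, Finset.sum_sub_distrib, ← Finset.sum_mul, ← Finset.mul_sum, hd',
      ← Finset.sum_div, ← Finset.mul_sum]
    push_cast
    ring_nf
  rw [hprod, Finset.mul_sum]
  exact (norm_prod_sub_prod_le _ (fun i _ => norm_signCharFun_le_one hθ (d i))
    fun i _ => norm_cexp_gaussian_le_one hθ (d i)).trans
    (Finset.sum_le_sum fun i _ => norm_signCharFun_sub_cexp_le hθ (d i))

/-! ### The Curie–Weiss measure as a mixture of product measures -/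

lemma isingWeight_pos {ι : Type*} [Fintype ι] (β : ℝ) (Q : Matrix ι ι ℝ) (z : ι → ℝ) :
    0 < isingWeight β Q z := Real.exp_pos _

lemma isingZ_pos (ι : Type*) [Fintype ι] [DecidableEq ι] (β : ℝ) (Q : Matrix ι ι ℝ) :
    0 < isingZ ι β Q :=
  Finset.sum_pos (fun _ _ => isingWeight_pos _ _ _) Finset.univ_nonempty

instance isProbabilityMeasure_isingMeasure (ι : Type*) [Fintype ι] [DecidableEq ι] (β : ℝ)
    (Q : Matrix ι ι ℝ) : IsProbabilityMeasure (isingMeasure ι β Q) := by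
  constructor
  simp only [isingMeasure, Measure.coe_finsetSum, Finset.sum_apply, Measure.smul_apply,
    measure_univ, smul_eq_mul, mul_one]
  rw [← ENNReal.ofReal_sum_of_nonneg
    (fun s _ => (div_pos (isingWeight_pos _ _ _) (isingZ_pos _ _ _)).le), ← Finset.sum_div,
    ← isingZ, div_self (isingZ_pos ι β Q).ne', ENNReal.ofReal_one]

lemma integral_isingMeasure {ι E : Type*} [Fintype ι] [DecidableEq ι] [NormedAddCommGroup E]
    [NormedSpace ℝ E] [CompleteSpace E] (β : ℝ) (Q : Matrix ι ι ℝ) (F : (ι → ℝ) → E) :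
    ∫ x, F x ∂(isingMeasure ι β Q)
      = (isingZ ι β Q)⁻¹ • ∑ s : ι → Bool, isingWeight β Q (pmVec s) • F (pmVec s) := by
  rw [isingMeasure, integral_finsetSum_measure, Finset.smul_sum]
  · refine Finset.sum_congr rfl fun s _ => ?_
    rw [integral_smul_measure, integral_dirac, smul_smul, ← div_eq_inv_mul, ENNReal.toReal_ofReal
      (div_pos (isingWeight_pos _ _ _) (isingZ_pos _ _ _)).le]
  · exact fun s _ => (integrable_dirac (by simp)).smul_measure ENNReal.ofReal_ne_top

lemma pmVec_sq {ι : Type*} (s : ι → Bool) (i : ι) : pmVec s i ^ 2 = 1 := by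
  unfold pmVec
  split_ifs <;> norm_num

lemma isingMeasure_ae_sq_eq_one {ι : Type*} [Fintype ι] [DecidableEq ι] (β : ℝ)
    (Q : Matrix ι ι ℝ) : ∀ᵐ x ∂(isingMeasure ι β Q), ∀ i, x i ^ 2 = 1 := by
  rw [isingMeasure, ← Measure.sum_fintype, Measure.ae_sum_iff]
  intro s
  refine Measure.ae_smul_measure ?_ _
  rw [ae_dirac_eq]
  exact pmVec_sq s

lemma QCW_mulVec {n : ℕ} (z : Fin n → ℝ) (i : Fin n) :
    (QCW n *ᵥ z) i = (n : ℝ)⁻¹ * (∑ j, z j - z i) := by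
  have hsplit : ∀ j, QCW n i j * z j = (n : ℝ)⁻¹ * z j - if i = j then (n : ℝ)⁻¹ * z j else 0 := by
    intro j
    simp only [QCW]
    split_ifs <;> ring
  simp only [Matrix.mulVec, dotProduct, hsplit, Finset.sum_sub_distrib, ← Finset.mul_sum,
    Finset.sum_ite_eq, Finset.mem_univ, if_true]
  ring

lemma isingWeight_QCW {n : ℕ} (hn : n ≠ 0) (β : ℝ) {z : Fin n → ℝ} (hz : ∀ i, z i ^ 2 = 1) :
    isingWeight β (QCW n) z
      = Real.exp (-β / 2) * Real.exp (β / n * (∑ i, z i) ^ 2 / 2) := by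
  have hn' : (n : ℝ) ≠ 0 := by exact_mod_cast hn
  have hquad : z ⬝ᵥ QCW n *ᵥ z = (n : ℝ)⁻¹ * ((∑ i, z i) ^ 2 - n) := by
    calc z ⬝ᵥ QCW n *ᵥ z
        = ∑ i, (n : ℝ)⁻¹ * (z i * ∑ j, z j - z i ^ 2) := by
          simp only [dotProduct, QCW_mulVec]
          exact Finset.sum_congr rfl fun i _ => by ring
      _ = (n : ℝ)⁻¹ * ((∑ i, z i) ^ 2 - n) := by
          simp only [hz, ← Finset.mul_sum, Finset.sum_sub_distrib, ← Finset.sum_mul]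
          simp [sq]
  rw [isingWeight, hquad, ← Real.exp_add]
  congr 1
  field_simp
  ring

lemma cosh_ofReal_add_mul_I (h x : ℝ) :
    Complex.cosh (h + x * Complex.I) = Real.cosh h * signCharFun (Real.tanh h) x := by
  have hc : Complex.cosh h ≠ 0 := by exact_mod_cast (Real.cosh_pos h).ne'
  have hadd := Complex.cosh_add_sinh (h : ℂ)
  have hsub := Complex.cosh_sub_sinh (h : ℂ)
  rw [signCharFun, Complex.cosh, neg_add, Complex.exp_add, Complex.exp_add, ← hadd, ← hsub,
    Real.tanh_eq_sinh_div_cosh]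
  push_cast
  field_simp

lemma sum_cexp_pmVec {ι : Type*} [Fintype ι] [DecidableEq ι] (z : ι → ℂ) :
    ∑ s : ι → Bool, Complex.exp (∑ i, z i * pmVec s i) = ∏ i, (2 * Complex.cosh (z i)) := by
  simp only [Complex.exp_sum, pmVec]
  rw [← Fintype.prod_sum fun i (b : Bool) => Complex.exp (z i * ((if b then 1 else -1 : ℝ) : ℂ))]
  refine Finset.prod_congr rfl fun i _ => ?_
  simp [Complex.two_cosh]

/-- The law of the random external field that turns the Curie–Weiss model at inverse temperature
`β` into independent spins: given the field `h`, the spins are i.i.d. with mean `tanh h`. -/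
def curieWeissField (β : ℝ) (n : ℕ) : Measure ℝ :=
  (gaussianReal 0 (β / n).toNNReal).tilted fun h => n * Real.log (Real.cosh h)

lemma exp_nat_mul_log_cosh (n : ℕ) (h : ℝ) :
    Real.exp (n * Real.log (Real.cosh h)) = Real.cosh h ^ n := by
  rw [Real.exp_nat_mul, Real.exp_log (Real.cosh_pos h)]

lemma cosh_le_exp_abs (h : ℝ) : Real.cosh h ≤ Real.exp |h| := by
  rw [← Real.cosh_abs, ← Real.cosh_add_sinh]
  exact le_add_of_nonneg_right (Real.sinh_nonneg_iff.2 (abs_nonneg h))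

lemma integrable_cosh_pow_gaussianReal (μ : ℝ) (v : NNReal) (n : ℕ) :
    Integrable (fun h => Real.cosh h ^ n) (gaussianReal μ v) := by
  have hdom : Integrable (fun h => Real.exp (n * |h|)) (gaussianReal μ v) :=
    integrable_exp_mul_abs (integrable_exp_mul_gaussianReal _) (integrable_exp_mul_gaussianReal _)
  refine hdom.mono' (by fun_prop) (ae_of_all _ fun h => ?_)
  rw [Real.norm_of_nonneg (pow_nonneg (Real.cosh_pos h).le n), Real.exp_nat_mul]
  exact pow_le_pow_left₀ (Real.cosh_pos h).le (cosh_le_exp_abs h) n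

instance isProbabilityMeasure_curieWeissField (β : ℝ) (n : ℕ) :
    IsProbabilityMeasure (curieWeissField β n) := by
  refine isProbabilityMeasure_tilted ?_
  simp only [exp_nat_mul_log_cosh]
  exact integrable_cosh_pow_gaussianReal _ _ n

lemma isingWeight_QCW_eq_integral {n : ℕ} (hn : n ≠ 0) {β : ℝ} (hβ : 0 ≤ β) {z : Fin n → ℝ}
    (hz : ∀ i, z i ^ 2 = 1) :
    isingWeight β (QCW n) z
      = Real.exp (-β / 2) * ∫ h, Real.exp ((∑ i, z i) * h) ∂gaussianReal 0 (β / n).toNNReal := by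
  have hmgf := congrFun (mgf_fun_id_gaussianReal (μ := 0) (v := (β / n).toNNReal)) (∑ i, z i)
  rw [mgf, Real.coe_toNNReal _ (by positivity), zero_mul, zero_add] at hmgf
  rw [isingWeight_QCW hn β hz, hmgf]

lemma sum_isingWeight_QCW_mul_cexp {n : ℕ} (hn : n ≠ 0) {β : ℝ} (hβ : 0 ≤ β) (d : Fin n → ℝ) :
    ∑ s : Fin n → Bool, (isingWeight β (QCW n) (pmVec s) : ℂ)
        * Complex.exp ((∑ i, d i * pmVec s i : ℝ) * Complex.I)
      = Real.exp (-β / 2) * 2 ^ n * ∫ h, ((Real.cosh h ^ n : ℝ) : ℂ)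
        * ∏ i, signCharFun (Real.tanh h) (d i) ∂gaussianReal 0 (β / n).toNNReal := by
  set γ := gaussianReal 0 (β / n).toNNReal
  have hterm : ∀ s : Fin n → Bool, (isingWeight β (QCW n) (pmVec s) : ℂ)
        * Complex.exp ((∑ i, d i * pmVec s i : ℝ) * Complex.I)
      = Real.exp (-β / 2) * ∫ h, Complex.exp (∑ i, (h + d i * Complex.I) * pmVec s i) ∂γ := by
    intro s
    rw [isingWeight_QCW_eq_integral hn hβ (pmVec_sq s), Complex.ofReal_mul, mul_assoc,
      ← integral_complex_ofReal, ← integral_mul_const]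
    congr 2 with h
    rw [Complex.ofReal_exp, ← Complex.exp_add]
    push_cast
    simp only [Finset.sum_mul, ← Finset.sum_add_distrib]
    congr 2 with i
    ring
  have hint : ∀ s : Fin n → Bool,
      Integrable (fun h : ℝ => Complex.exp (∑ i, (h + d i * Complex.I) * pmVec s i)) γ := by
    intro s
    refine (integrable_exp_mul_gaussianReal (∑ i, pmVec s i)).mono' (by fun_prop)
      (ae_of_all _ fun h => ?_)
    rw [Complex.norm_exp]
    simp [← Finset.mul_sum, mul_comm]
  simp only [hterm, ← Finset.mul_sum]
  rw [← integral_finsetSum _ fun s _ => hint s, mul_assoc, ← integral_const_mul (2 ^ n : ℂ)]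
  congr 2 with h
  rw [sum_cexp_pmVec]
  simp only [cosh_ofReal_add_mul_I, Finset.prod_mul_distrib, Finset.prod_const, Finset.card_univ,
    Fintype.card_fin]
  push_cast
  ring

lemma integral_curieWeissField {E : Type*} [NormedAddCommGroup E] [NormedSpace ℝ E] (β : ℝ)
    (n : ℕ) (g : ℝ → E) :
    ∫ h, g h ∂curieWeissField β n
      = (∫ h, Real.cosh h ^ n ∂gaussianReal 0 (β / n).toNNReal)⁻¹
        • ∫ h, Real.cosh h ^ n • g h ∂gaussianReal 0 (β / n).toNNReal := by
  rw [curieWeissField, integral_tilted, ← integral_smul]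
  simp only [exp_nat_mul_log_cosh, smul_smul, div_eq_inv_mul]

lemma integral_cexp_isingMeasure_QCW {n : ℕ} (hn : n ≠ 0) {β : ℝ} (hβ : 0 ≤ β)
    (d : Fin n → ℝ) :
    ∫ y, Complex.exp ((∑ i, d i * y i : ℝ) * Complex.I) ∂isingMeasure (Fin n) β (QCW n)
      = ∫ h, ∏ i, signCharFun (Real.tanh h) (d i) ∂curieWeissField β n := by
  have hZ : (isingZ (Fin n) β (QCW n) : ℂ) = Real.exp (-β / 2) * 2 ^ n
      * (∫ h, Real.cosh h ^ n ∂gaussianReal 0 (β / n).toNNReal : ℝ) := by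
    have h := sum_isingWeight_QCW_mul_cexp hn hβ 0
    simp only [Pi.zero_apply, zero_mul, Finset.sum_const_zero, Complex.ofReal_zero,
      Complex.exp_zero, mul_one, signCharFun_zero, Finset.prod_const_one] at h
    rw [isingZ, Complex.ofReal_sum, h, integral_complex_ofReal]
  have hc : (Real.exp (-β / 2) : ℂ) * 2 ^ n ≠ 0 :=
    mul_ne_zero (by exact_mod_cast (Real.exp_pos _).ne') (pow_ne_zero n two_ne_zero)
  rw [integral_isingMeasure, integral_curieWeissField]
  simp only [Complex.real_smul, Complex.ofReal_inv]
  rw [sum_isingWeight_QCW_mul_cexp hn hβ, hZ, mul_inv, mul_mul_mul_comm, inv_mul_cancel₀ hc,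
    one_mul]

/-! ### Laplace's method -/

lemma tilted_real_mul_real_le {α : Type*} [MeasurableSpace α] (μ : Measure α) [IsFiniteMeasure μ]
    {f : α → ℝ} {s : Set α} (hs : MeasurableSet s) {a : ℝ} (hfs : ∀ x ∈ s, f x ≤ a) (b : ℝ) :
    (μ.tilted f).real s * μ.real {x | b ≤ f x} ≤ Real.exp (a - b) * μ.real Set.univ := by
  by_cases hf : Integrable (fun x => Real.exp (f x)) μ
  swap
  · rw [tilted_of_not_integrable hf, measureReal_zero_apply, zero_mul]
    positivity
  set Z := ∫ x, Real.exp (f x) ∂μ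
  rcases eq_zero_or_neZero μ with rfl | _
  · simp
  have hZ : 0 < Z := integral_exp_pos hf
  have hnum : ∫ x in s, Real.exp (f x) ∂μ ≤ Real.exp a * μ.real Set.univ := by
    calc ∫ x in s, Real.exp (f x) ∂μ
        ≤ ∫ _ in s, Real.exp a ∂μ :=
          setIntegral_mono_on hf.integrableOn integrableOn_const hs
            fun x hx => Real.exp_le_exp.2 (hfs x hx)
      _ ≤ Real.exp a * μ.real Set.univ := by
          rw [setIntegral_const, smul_eq_mul, mul_comm]
          exact mul_le_mul_of_nonneg_left (measureReal_mono s.subset_univ) (Real.exp_pos a).le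
  have hden : Real.exp b * μ.real {x | b ≤ f x} ≤ Z := by
    simpa only [Real.exp_le_exp] using
      mul_meas_ge_le_integral_of_nonneg (ae_of_all _ fun x => (Real.exp_pos (f x)).le) hf
        (Real.exp b)
  have htilted : (μ.tilted f).real s = (∫ x in s, Real.exp (f x) ∂μ) / Z := by
    rw [measureReal_def, tilted_apply_eq_ofReal_integral' f hs, integral_div,
      ENNReal.toReal_ofReal (by positivity)]
  rw [htilted, div_mul_eq_mul_div, div_le_iff₀ hZ, Real.exp_sub]
  calc (∫ x in s, Real.exp (f x) ∂μ) * μ.real {x | b ≤ f x}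
      ≤ Real.exp a * μ.real Set.univ * (Z / Real.exp b) :=
        mul_le_mul hnum ((le_div_iff₀' (Real.exp_pos b)).2 hden) measureReal_nonneg (by positivity)
    _ = Real.exp a / Real.exp b * μ.real Set.univ * Z := by ring

/-- Tilting by `f` first reduces to a probability measure, whatever the mass of `μ`. -/
lemma tendsto_tilted_nat_mul_zero {α : Type*} [MeasurableSpace α] {μ : Measure α} {f : α → ℝ}
    (hf : Integrable (fun x => Real.exp (f x)) μ) {s : Set α} (hs : MeasurableSet s) {p q : ℝ}
    (hfs : ∀ x ∈ s, f x ≤ q) (hqp : q < p) (hp : μ {x | p ≤ f x} ≠ 0) :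
    Tendsto (fun n : ℕ => μ.tilted (fun x => n * f x) s) atTop (𝓝 0) := by
  set ν := μ.tilted f
  have hν : 0 < ν.real {x | p ≤ f x} :=
    ENNReal.toReal_pos (fun h => hp (absolutelyContinuous_tilted hf h)) (measure_ne_top _ _)
  have hsucc : ∀ n : ℕ, μ.tilted (fun x => (n + 1 : ℕ) * f x) = ν.tilted fun x => n * f x := by
    intro n
    rw [tilted_tilted hf]
    congr 1 with x
    simp only [Pi.add_apply]
    push_cast
    ring
  have hbound : ∀ n : ℕ, (ν.tilted fun x => n * f x).real s
      ≤ Real.exp (q - p) ^ n * (ν.real Set.univ / ν.real {x | p ≤ f x}) := by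
    intro n
    have h := tilted_real_mul_real_le ν hs (a := n * q)
      (fun x hx => mul_le_mul_of_nonneg_left (hfs x hx) n.cast_nonneg) (n * p)
    rw [← mul_sub, Real.exp_nat_mul] at h
    rw [← mul_div_assoc, le_div_iff₀ hν]
    refine (mul_le_mul_of_nonneg_left (measureReal_mono fun x hx => ?_) measureReal_nonneg).trans h
    exact mul_le_mul_of_nonneg_left (show p ≤ f x from hx) n.cast_nonneg
  have hgeom := (tendsto_pow_atTop_nhds_zero_of_lt_one (Real.exp_pos _).le
    (Real.exp_lt_one_iff.2 (sub_neg.2 hqp))).mul_const (ν.real Set.univ / ν.real {x | p ≤ f x})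
  rw [zero_mul] at hgeom
  rw [← tendsto_add_atTop_iff_nat 1]
  simp only [hsucc]
  exact (ENNReal.tendsto_toReal_iff (fun _ => measure_ne_top _ _) ENNReal.zero_ne_top).1
    (squeeze_zero (fun _ => measureReal_nonneg) hbound hgeom)

lemma exists_lt_forall_le_of_strictMonoOn_of_strictAntiOn {f : ℝ → ℝ} {a δ : ℝ} (ha : 0 ≤ a)
    (hδ : 0 < δ) (hmono : StrictMonoOn f (Set.Icc 0 a)) (hanti : StrictAntiOn f (Set.Ici a)) :
    ∃ q < f a, ∀ t, 0 ≤ t → δ ≤ |t - a| → f t ≤ q := by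
  have hright : f (a + δ) < f a :=
    hanti Set.self_mem_Ici (Set.mem_Ici.2 (by linarith)) (by linarith)
  have hle_right : ∀ t, a + δ ≤ t → f t ≤ f (a + δ) := fun t ht =>
    hanti.antitoneOn (Set.mem_Ici.2 (by linarith)) (Set.mem_Ici.2 (by linarith)) ht
  rcases lt_or_ge a δ with haδ | haδ
  · refine ⟨f (a + δ), hright, fun t ht₀ ht => hle_right t ?_⟩
    rcases le_abs.1 ht with h | h <;> linarith
  · have hleft : f (a - δ) < f a :=
      hmono ⟨by linarith, by linarith⟩ ⟨ha, le_rfl⟩ (by linarith)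
    refine ⟨max (f (a + δ)) (f (a - δ)), max_lt hright hleft, fun t ht₀ ht => ?_⟩
    rcases le_abs.1 ht with h | h
    · exact le_max_of_le_left (hle_right t (by linarith))
    · exact le_max_of_le_right
        (hmono.monotoneOn ⟨ht₀, by linarith⟩ ⟨by linarith, by linarith⟩ (by linarith))

lemma hasDerivAt_tanh (x : ℝ) : HasDerivAt Real.tanh (1 / Real.cosh x ^ 2) x := by
  have h := (Real.hasDerivAt_sinh x).div (Real.hasDerivAt_cosh x) (Real.cosh_pos x).ne'
  rw [← sq, ← sq, Real.cosh_sq_sub_sinh_sq] at h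
  exact h.congr_of_eventuallyEq (Eventually.of_forall Real.tanh_eq_sinh_div_cosh)

lemma continuous_tanh : Continuous Real.tanh :=
  continuous_iff_continuousAt.2 fun x => (hasDerivAt_tanh x).continuousAt

lemma strictConcaveOn_tanh : StrictConcaveOn ℝ (Set.Ici 0) Real.tanh := by
  refine StrictAntiOn.strictConcaveOn_of_deriv (convex_Ici 0) continuous_tanh.continuousOn ?_
  intro x hx y hy hxy
  rw [interior_Ici] at hx hy
  rw [(hasDerivAt_tanh x).deriv, (hasDerivAt_tanh y).deriv]
  have hcosh : Real.cosh x < Real.cosh y :=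
    Real.cosh_lt_cosh.2 (by rwa [abs_of_pos hx, abs_of_pos hy])
  have := Real.cosh_pos x
  gcongr

lemma isingMag_mem (β : ℝ) : isingMag β ∈ {m : ℝ | 0 ≤ m ∧ m = Real.tanh (β * m)} := by
  refine IsClosed.csSup_mem ?_ ⟨0, by simp⟩ ⟨1, ?_⟩
  · exact isClosed_Ici.inter
      (isClosed_eq continuous_id (continuous_tanh.comp (continuous_const_mul β)))
  · rintro m ⟨_, hm⟩
    exact hm ▸ (Real.tanh_lt_one _).le

lemma isingMag_nonneg (β : ℝ) : 0 ≤ isingMag β := (isingMag_mem β).1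

lemma tanh_mul_isingMag (β : ℝ) : Real.tanh (β * isingMag β) = isingMag β :=
  (isingMag_mem β).2.symm

lemma le_isingMag {β t : ℝ} (ht : 0 ≤ t) (h : t = Real.tanh (β * t)) : t ≤ isingMag β := by
  refine le_csSup ⟨1, ?_⟩ ⟨ht, h⟩
  rintro m ⟨_, hm⟩
  exact hm ▸ (Real.tanh_lt_one _).le

/-- Otherwise `tanh (β s) - s` would have a zero in `[t, 1]`, beyond the largest one. -/
lemma tanh_mul_lt_of_isingMag_lt {β t : ℝ} (ht : isingMag β < t) : Real.tanh (β * t) < t := by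
  by_contra! hcon
  have ht₁ : t ≤ 1 := hcon.trans (Real.tanh_lt_one _).le
  have hcont : Continuous fun s => Real.tanh (β * s) - s :=
    (continuous_tanh.comp (continuous_const_mul β)).sub continuous_id
  obtain ⟨s, hs, hzero⟩ := intermediate_value_Icc' ht₁ hcont.continuousOn
    (⟨by linarith [Real.tanh_lt_one (β * 1)], by linarith⟩ : (0 : ℝ) ∈ Set.Icc _ _)
  have hroot := le_isingMag (((isingMag_nonneg β).trans ht.le).trans hs.1)
    (sub_eq_zero.1 hzero).symm
  linarith [hs.1]

lemma lt_tanh_mul_of_lt_isingMag {β t : ℝ} (hβ : 0 < β) (ht₀ : 0 < t) (ht : t < isingMag β) :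
    t < Real.tanh (β * t) := by
  have hm : 0 < isingMag β := ht₀.trans ht
  have h := strictConcaveOn_tanh.2 (Set.self_mem_Ici (a := (0 : ℝ)))
    (Set.mem_Ici.2 (by positivity : 0 ≤ β * isingMag β)) (by positivity)
    (sub_pos.2 ((div_lt_one hm).2 ht)) (div_pos ht₀ hm) (sub_add_cancel _ _)
  simp only [smul_eq_mul, mul_zero, Real.tanh_zero, zero_add, tanh_mul_isingMag] at h
  rwa [div_mul_cancel₀ _ hm.ne', mul_left_comm, div_mul_cancel₀ _ hm.ne'] at h

/-! ### Convergence in probability and in distribution -/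

lemma dist_integral_le_add_measureReal {μ : Measure ℝ} [IsProbabilityMeasure μ]
    (f : BoundedContinuousFunction ℝ ℝ) {c δ η : ℝ} (hη : 0 ≤ η)
    (hf : ∀ x, |x - c| < δ → dist (f x) (f c) ≤ η) :
    dist (∫ x, f x ∂μ) (f c) ≤ η + 2 * ‖f‖ * μ.real {x | δ ≤ |x - c|} := by
  set s : Set ℝ := {x | δ ≤ |x - c|}
  have hmeas : MeasurableSet s := measurableSet_le measurable_const (by fun_prop)
  have hpt : ∀ x, ‖f x - f c‖ ≤ η + s.indicator (fun _ => 2 * ‖f‖) x := by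
    intro x
    by_cases hx : x ∈ s
    · rw [Set.indicator_of_mem hx]
      exact (f.dist_le_two_norm x c).trans (le_add_of_nonneg_left hη)
    · rw [Set.indicator_of_notMem hx, add_zero]
      exact hf x (not_le.1 hx)
  have hind : Integrable (s.indicator fun _ => 2 * ‖f‖) μ := (integrable_const _).indicator hmeas
  calc dist (∫ x, f x ∂μ) (f c) = ‖∫ x, (f x - f c) ∂μ‖ := by
        rw [integral_sub (f.integrable _) (integrable_const _), integral_const, probReal_univ,
          one_smul, dist_eq_norm]
    _ ≤ ∫ x, (η + s.indicator (fun _ => 2 * ‖f‖) x) ∂μ :=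
        norm_integral_le_of_norm_le ((integrable_const η).add hind) (ae_of_all _ hpt)
    _ = η + 2 * ‖f‖ * μ.real s := by
        rw [integral_add (integrable_const η) hind, integral_const, probReal_univ, one_smul,
          integral_indicator_const _ hmeas, smul_eq_mul, mul_comm (μ.real s)]

namespace TendstoInProbability

lemma map {μ : ℕ → Measure ℝ} {c : ℝ} (h : TendstoInProbability μ c) {f : ℝ → ℝ}
    (hf : Measurable f) (hc : ContinuousAt f c) :
    TendstoInProbability (fun n => (μ n).map f) (f c) := by
  intro ε hε
  obtain ⟨δ, hδ, hfδ⟩ := Metric.continuousAt_iff.1 hc ε hε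
  refine tendsto_of_tendsto_of_tendsto_of_le_of_le tendsto_const_nhds (h δ hδ)
    (fun _ => zero_le) fun n => ?_
  rw [Measure.map_apply hf (measurableSet_le measurable_const (by fun_prop))]
  refine measure_mono fun x (hx : ε ≤ |f x - f c|) => ?_
  by_contra hxδ
  exact absurd (hfδ (not_le.1 hxδ)) (not_lt.2 hx)

lemma map_prod {μ ν : ℕ → Measure ℝ} [∀ n, IsProbabilityMeasure (μ n)]
    [∀ n, IsProbabilityMeasure (ν n)] {a b : ℝ} (hμ : TendstoInProbability μ a)
    (hν : TendstoInProbability ν b) {f : ℝ × ℝ → ℝ} (hf : Measurable f)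
    (hc : ContinuousAt f (a, b)) :
    TendstoInProbability (fun n => ((μ n).prod (ν n)).map f) (f (a, b)) := by
  intro ε hε
  obtain ⟨δ, hδ, hfδ⟩ := Metric.continuousAt_iff.1 hc ε hε
  have hsum := (hμ δ hδ).add (hν δ hδ)
  rw [add_zero] at hsum
  refine tendsto_of_tendsto_of_tendsto_of_le_of_le tendsto_const_nhds hsum
    (fun _ => zero_le) fun n => ?_
  rw [Measure.map_apply hf (measurableSet_le measurable_const (by fun_prop))]
  calc ((μ n).prod (ν n)) (f ⁻¹' {x | ε ≤ |x - f (a, b)|})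
      ≤ ((μ n).prod (ν n)) ({x | δ ≤ |x - a|} ×ˢ Set.univ ∪ Set.univ ×ˢ {y | δ ≤ |y - b|}) := by
        refine measure_mono fun p (hp : ε ≤ |f p - f (a, b)|) => ?_
        simp only [Set.mem_union, Set.mem_prod, Set.mem_univ, and_true, true_and]
        by_contra! hlt
        exact absurd (hfδ (max_lt (not_le.1 hlt.1) (not_le.1 hlt.2))) (not_lt.2 hp)
    _ ≤ μ n {x | δ ≤ |x - a|} + ν n {y | δ ≤ |y - b|} := by
        refine (measure_union_le _ _).trans_eq ?_
        rw [Measure.prod_prod, Measure.prod_prod, measure_univ, measure_univ, mul_one, one_mul]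

lemma tendsto_integral {μ : ℕ → Measure ℝ} [∀ n, IsProbabilityMeasure (μ n)] {c : ℝ}
    (h : TendstoInProbability μ c) (f : BoundedContinuousFunction ℝ ℝ) :
    Tendsto (fun n => ∫ x, f x ∂μ n) atTop (𝓝 (f c)) := by
  rw [Metric.tendsto_nhds]
  intro ε hε
  obtain ⟨δ, hδ, hfδ⟩ :=
    Metric.continuousAt_iff.1 (f.continuous.continuousAt (x := c)) (ε / 2) (half_pos hε)
  have htail : Tendsto (fun n => 2 * ‖f‖ * (μ n).real {x | δ ≤ |x - c|}) atTop (𝓝 0) := by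
    have := ((ENNReal.tendsto_toReal ENNReal.zero_ne_top).comp (h δ hδ)).const_mul (2 * ‖f‖)
    rwa [ENNReal.toReal_zero, mul_zero] at this
  filter_upwards [htail.eventually_lt_const (half_pos hε)] with n hn
  linarith [dist_integral_le_add_measureReal (μ := μ n) f (half_pos hε).le
    fun x hx => (hfδ (x := x) hx).le]

end TendstoInProbability

lemma tendstoInDistribution_of_tendsto_charFun {μ : ℕ → Measure ℝ} {ν : Measure ℝ}
    [∀ n, IsProbabilityMeasure (μ n)] [IsProbabilityMeasure ν]
    (h : ∀ t, Tendsto (fun n => charFun (μ n) t) atTop (𝓝 (charFun ν t))) :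
    TendstoInDistribution μ ν := by
  let μ' : ℕ → ProbabilityMeasure ℝ := fun n => ⟨μ n, inferInstance⟩
  let ν' : ProbabilityMeasure ℝ := ⟨ν, inferInstance⟩
  have hweak : Tendsto μ' atTop (𝓝 ν') := ProbabilityMeasure.tendsto_iff_tendsto_charFun.2 h
  exact ProbabilityMeasure.tendsto_iff_forall_integral_tendsto.1 hweak

/-! ### Concentration of the Curie–Weiss field -/

/-- The exponential rate of the Curie–Weiss field: its law at size `n` has Lebesgue density
proportional to `exp (n * curieWeissPotential β h)`. -/
def curieWeissPotential (β h : ℝ) : ℝ := Real.log (Real.cosh h) - h ^ 2 / (2 * β)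

lemma curieWeissPotential_abs (β h : ℝ) : curieWeissPotential β |h| = curieWeissPotential β h := by
  rw [curieWeissPotential, curieWeissPotential, Real.cosh_abs, sq_abs]

lemma hasDerivAt_curieWeissPotential (β h : ℝ) :
    HasDerivAt (curieWeissPotential β) (Real.tanh h - h / β) h := by
  have hlog := (Real.hasDerivAt_cosh h).log (Real.cosh_pos h).ne'
  refine (hlog.sub ((hasDerivAt_pow 2 h).div_const (2 * β))).congr_deriv ?_
  rw [Real.tanh_eq_sinh_div_cosh]
  simp only [Nat.cast_ofNat, Nat.add_one_sub_one, pow_one]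
  rw [mul_div_mul_left _ _ two_ne_zero]

lemma continuous_curieWeissPotential (β : ℝ) : Continuous (curieWeissPotential β) :=
  continuous_iff_continuousAt.2 fun h => (hasDerivAt_curieWeissPotential β h).continuousAt

lemma strictMonoOn_curieWeissPotential {β : ℝ} (hβ : 0 < β) :
    StrictMonoOn (curieWeissPotential β) (Set.Icc 0 (β * isingMag β)) := by
  refine strictMonoOn_of_deriv_pos (convex_Icc _ _)
    (continuous_curieWeissPotential β).continuousOn fun h hh => ?_
  rw [interior_Icc] at hh
  have hlt := lt_tanh_mul_of_lt_isingMag hβ (div_pos hh.1 hβ) ((div_lt_iff₀' hβ).2 hh.2)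
  rw [mul_div_cancel₀ h hβ.ne'] at hlt
  rw [(hasDerivAt_curieWeissPotential β h).deriv]
  exact sub_pos.2 hlt

lemma strictAntiOn_curieWeissPotential {β : ℝ} (hβ : 0 < β) :
    StrictAntiOn (curieWeissPotential β) (Set.Ici (β * isingMag β)) := by
  refine strictAntiOn_of_deriv_neg (convex_Ici _)
    (continuous_curieWeissPotential β).continuousOn fun h hh => ?_
  rw [interior_Ici] at hh
  have hlt := tanh_mul_lt_of_isingMag_lt ((lt_div_iff₀' hβ).2 hh)
  rw [mul_div_cancel₀ h hβ.ne'] at hlt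
  rw [(hasDerivAt_curieWeissPotential β h).deriv]
  exact sub_neg.2 hlt

lemma integrable_exp_gaussianExponent (μ : ℝ) {v : NNReal} (hv : v ≠ 0) :
    Integrable fun x : ℝ => Real.exp (-(x - μ) ^ 2 / (2 * v)) := by
  have hne : (√(2 * Real.pi * v))⁻¹ ≠ 0 := by positivity
  rw [← integrable_const_mul_iff hne.isUnit]
  exact integrable_gaussianPDFReal μ v

lemma gaussianReal_eq_tilted_volume (μ : ℝ) {v : NNReal} (hv : v ≠ 0) :
    gaussianReal μ v = volume.tilted fun x => -(x - μ) ^ 2 / (2 * v) := by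
  have hint : ∫ x, Real.exp (-(x - μ) ^ 2 / (2 * v)) = √(2 * Real.pi * v) := by
    have h := integral_gaussianPDFReal_eq_one μ hv
    simp only [gaussianPDFReal, integral_const_mul] at h
    exact (inv_mul_eq_one₀ (by positivity)).1 h |>.symm
  rw [gaussianReal_of_var_ne_zero μ hv, Measure.tilted, hint]
  congr 1 with x
  rw [gaussianPDF, gaussianPDFReal, inv_mul_eq_div]

lemma curieWeissField_eq_tilted_volume {β : ℝ} (hβ : 0 < β) {n : ℕ} (hn : n ≠ 0) :
    curieWeissField β n = volume.tilted fun h => n * curieWeissPotential β h := by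
  have hpos : 0 < β / n := by positivity
  have hv : (β / n).toNNReal ≠ 0 := (Real.toNNReal_pos.2 hpos).ne'
  rw [curieWeissField, gaussianReal_eq_tilted_volume 0 hv,
    tilted_tilted (integrable_exp_gaussianExponent 0 hv)]
  congr 1 with h
  rw [Pi.add_apply, Real.coe_toNNReal _ hpos.le, curieWeissPotential]
  field_simp
  ring

lemma integrable_exp_curieWeissPotential {β : ℝ} (hβ : 0 < β) :
    Integrable fun h => Real.exp (curieWeissPotential β h) := by
  by_contra hnot
  have hprob := isProbabilityMeasure_curieWeissField β 1
  rw [curieWeissField_eq_tilted_volume hβ one_ne_zero] at hprob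
  simp only [Nat.cast_one, one_mul] at hprob
  rw [tilted_of_not_integrable hnot] at hprob
  exact hprob.ne_zero _ rfl

lemma tendstoInProbability_abs_curieWeissField {β : ℝ} (hβ : 0 ≤ β) :
    TendstoInProbability (fun n => (curieWeissField β n).map abs) (β * isingMag β) := by
  intro ε hε
  have hmeas : MeasurableSet {h : ℝ | ε ≤ |h - β * isingMag β|} :=
    measurableSet_le measurable_const (by fun_prop)
  simp only [Measure.map_apply measurable_abs hmeas]
  rcases hβ.eq_or_lt with rfl | hβ
  · refine tendsto_const_nhds.congr fun n => ?_
    have : curieWeissField 0 n ≪ Measure.dirac 0 := by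
      rw [curieWeissField, zero_div, Real.toNNReal_zero, gaussianReal_zero_var]
      exact tilted_absolutelyContinuous _ _
    refine (this ?_).symm
    rw [Measure.dirac_apply' _ (measurable_abs hmeas)]
    simpa using hε
  · obtain ⟨q, hq, hle⟩ := exists_lt_forall_le_of_strictMonoOn_of_strictAntiOn
      (mul_nonneg hβ.le (isingMag_nonneg β)) hε (strictMonoOn_curieWeissPotential hβ)
      (strictAntiOn_curieWeissPotential hβ)
    obtain ⟨p, hqp, hp⟩ := exists_between hq
    have hpos : volume {h | p ≤ curieWeissPotential β h} ≠ 0 := by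
      have hopen := isOpen_lt continuous_const (continuous_curieWeissPotential β) (f := fun _ => p)
      exact ((hopen.measure_pos volume ⟨_, hp⟩).trans_le
        (measure_mono fun x (hx : p < curieWeissPotential β x) => hx.le)).ne'
    refine (tendsto_tilted_nat_mul_zero (integrable_exp_curieWeissPotential hβ)
      (measurable_abs hmeas) (fun h hh => ?_) hqp hpos).congr' ?_
    · rw [← curieWeissPotential_abs]
      exact hle _ (abs_nonneg h) hh
    · filter_upwards [eventually_ne_atTop 0] with n hn
      rw [curieWeissField_eq_tilted_volume hβ hn]

lemma tendstoInProbability_tanh_sq_curieWeissField {β : ℝ} (hβ : 0 ≤ β) :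
    TendstoInProbability (fun n => (curieWeissField β n).map fun h => Real.tanh h ^ 2)
      (isingMag β ^ 2) := by
  have hcont : Continuous fun h => Real.tanh h ^ 2 := continuous_tanh.pow 2
  have h := (tendstoInProbability_abs_curieWeissField hβ).map hcont.measurable hcont.continuousAt
  simp only [Measure.map_map hcont.measurable measurable_abs, tanh_mul_isingMag] at h
  convert h using 4 with n x
  rcases abs_choice x with hx | hx <;> simp [hx]

/-! ### The sample covariance -/

lemma sum_sub_sampleMean {ι : Type*} [Fintype ι] (x : ι → ℝ) : ∑ i, (x i - sampleMean x) = 0 := by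
  rcases isEmpty_or_nonempty ι with _ | _
  · exact Finset.sum_of_isEmpty _
  · have hcard : (Fintype.card ι : ℝ) ≠ 0 := by exact_mod_cast Fintype.card_ne_zero
    rw [Finset.sum_sub_distrib, Finset.sum_const, Finset.card_univ, nsmul_eq_mul, sampleMean,
      mul_div_cancel₀ _ hcard, sub_self]

lemma sampleCov_eq_sum_sub_sampleMean_mul {ι : Type*} [Fintype ι] (x y : ι → ℝ) :
    sampleCov x y = (∑ i, (x i - sampleMean x) * y i) / Fintype.card ι := by
  simp only [sampleCov, mul_sub _ (y _)]
  rw [Finset.sum_sub_distrib, ← Finset.sum_mul, sum_sub_sampleMean, zero_mul, sub_zero]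

lemma sampleCov_self {ι : Type*} [Fintype ι] (x : ι → ℝ) :
    sampleCov x x = (∑ i, (x i - sampleMean x) ^ 2) / Fintype.card ι := by
  simp only [sampleCov, sq]

lemma sampleCov_self_nonneg {ι : Type*} [Fintype ι] (x : ι → ℝ) : 0 ≤ sampleCov x x := by
  rw [sampleCov_self]
  positivity

lemma sampleCov_self_of_sq_eq_one {ι : Type*} [Fintype ι] [Nonempty ι] {x : ι → ℝ}
    (hx : ∀ i, x i ^ 2 = 1) : sampleCov x x = 1 - sampleMean x ^ 2 := by
  have hcard : (Fintype.card ι : ℝ) ≠ 0 := by exact_mod_cast Fintype.card_ne_zero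
  rw [sampleCov_eq_sum_sub_sampleMean_mul, div_eq_iff hcard]
  have hmean : ∑ i, x i = sampleMean x * Fintype.card ι := (div_mul_cancel₀ _ hcard).symm
  simp only [sub_mul, Finset.sum_sub_distrib, ← Finset.mul_sum, ← sq, hx, hmean]
  simp only [Finset.sum_const, Finset.card_univ, nsmul_eq_mul, mul_one]
  ring

lemma abs_sampleMean_le {ι : Type*} [Fintype ι] [Nonempty ι] {x : ι → ℝ} {B : ℝ}
    (hx : ∀ i, |x i| ≤ B) : |sampleMean x| ≤ B := by
  have hcard : (0 : ℝ) < Fintype.card ι := by exact_mod_cast Fintype.card_pos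
  rw [sampleMean, abs_div, Nat.abs_cast, div_le_iff₀ hcard]
  calc |∑ i, x i| ≤ ∑ i, |x i| := Finset.abs_sum_le_sum_abs _ _
    _ ≤ ∑ _i : ι, B := Finset.sum_le_sum fun i _ => hx i
    _ = B * Fintype.card ι := by
      rw [Finset.sum_const, Finset.card_univ, nsmul_eq_mul, mul_comm]

/-- The coefficients of the spins `y` in the linear form `u * √n * sampleCov x y`, where `n` is
the number of spins. -/
def covContrast {ι : Type*} [Fintype ι] (u : ℝ) (x : ι → ℝ) (i : ι) : ℝ :=
  u * (x i - sampleMean x) / √(Fintype.card ι)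

lemma sum_covContrast {ι : Type*} [Fintype ι] (u : ℝ) (x : ι → ℝ) :
    ∑ i, covContrast u x i = 0 := by
  simp only [covContrast, ← Finset.sum_div, ← Finset.mul_sum]
  rw [sum_sub_sampleMean, mul_zero, zero_div]

lemma sum_covContrast_sq {ι : Type*} [Fintype ι] (u : ℝ) (x : ι → ℝ) :
    ∑ i, covContrast u x i ^ 2 = u ^ 2 * sampleCov x x := by
  simp only [covContrast, div_pow, mul_pow, Real.sq_sqrt (Nat.cast_nonneg _), ← Finset.sum_div,
    ← Finset.mul_sum]
  rw [sampleCov_self, mul_div_assoc]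

lemma sum_covContrast_mul {ι : Type*} [Fintype ι] (u : ℝ) (x y : ι → ℝ) :
    ∑ i, covContrast u x i * y i = u * (√(Fintype.card ι) * sampleCov x y) := by
  have hterm : ∀ i, covContrast u x i * y i
      = u / √(Fintype.card ι) * ((x i - sampleMean x) * y i) := fun i => by
    rw [covContrast]
    ring
  simp only [hterm, ← Finset.mul_sum]
  rw [sampleCov_eq_sum_sub_sampleMean_mul, mul_div_left_comm, Real.sqrt_div_self]
  ring

lemma sum_abs_covContrast_cubed_le {ι : Type*} [Fintype ι] [Nonempty ι] (u : ℝ) {x : ι → ℝ}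
    {B : ℝ} (hx : ∀ i, |x i| ≤ B) :
    ∑ i, |covContrast u x i| ^ 3 ≤ (2 * B * |u|) ^ 3 / √(Fintype.card ι) := by
  have hcard : √(Fintype.card ι) ≠ 0 :=
    (Real.sqrt_pos.2 (by exact_mod_cast Fintype.card_pos)).ne'
  have hterm : ∀ i, |covContrast u x i| ≤ 2 * B * |u| / √(Fintype.card ι) := by
    intro i
    rw [covContrast, abs_div, abs_of_nonneg (Real.sqrt_nonneg _), abs_mul, mul_comm]
    have := (abs_sub _ _).trans (add_le_add (hx i) (abs_sampleMean_le hx))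
    gcongr
    linarith
  calc ∑ i, |covContrast u x i| ^ 3
      ≤ ∑ _i : ι, (2 * B * |u| / √(Fintype.card ι)) ^ 3 :=
        Finset.sum_le_sum fun i _ => pow_le_pow_left₀ (abs_nonneg _) (hterm i) 3
    _ = (2 * B * |u|) ^ 3 * ((√(Fintype.card ι)) ^ 2 / √(Fintype.card ι) ^ 3) := by
        rw [Real.sq_sqrt (Nat.cast_nonneg _), Finset.sum_const, Finset.card_univ, nsmul_eq_mul,
          div_pow]
        ring
    _ = (2 * B * |u|) ^ 3 / √(Fintype.card ι) := by field_simp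

/-! ### The central limit theorem -/

lemma continuous_signCharFun_comp {X : Type*} [TopologicalSpace X] {f g : X → ℝ}
    (hf : Continuous f) (hg : Continuous g) : Continuous fun x => signCharFun (f x) (g x) := by
  unfold signCharFun
  fun_prop

lemma continuous_sampleMean {ι : Type*} [Fintype ι] :
    Continuous fun x : ι → ℝ => sampleMean x := by
  unfold sampleMean
  fun_prop

lemma continuous_sampleCov {ι : Type*} [Fintype ι] :
    Continuous fun p : (ι → ℝ) × (ι → ℝ) => sampleCov p.1 p.2 := by
  unfold sampleCov sampleMean
  fun_prop

lemma continuous_covContrast {ι : Type*} [Fintype ι] (u : ℝ) (i : ι) :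
    Continuous fun x : ι → ℝ => covContrast u x i := by
  unfold covContrast sampleMean
  fun_prop

lemma integrable_prod_signCharFun_covContrast {ι : Type*} [Fintype ι] (u : ℝ)
    (μ : Measure ((ι → ℝ) × ℝ)) [IsFiniteMeasure μ] :
    Integrable (fun p => ∏ i, signCharFun (Real.tanh p.2) (covContrast u p.1 i)) μ := by
  have hcont : Continuous fun p : (ι → ℝ) × ℝ =>
      ∏ i, signCharFun (Real.tanh p.2) (covContrast u p.1 i) :=
    continuous_finsetProd _ fun i _ => continuous_signCharFun_comp
      (continuous_tanh.comp continuous_snd) ((continuous_covContrast u i).comp continuous_fst)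
  refine Integrable.of_bound hcont.aestronglyMeasurable 1 (ae_of_all _ fun p => ?_)
  rw [norm_prod]
  exact Finset.prod_le_one (fun _ _ => norm_nonneg _)
    fun i _ => norm_signCharFun_le_one (Real.abs_tanh_lt_one _).le _

lemma charFun_map_sqrt_mul_sampleCov {n : ℕ} (hn : n ≠ 0) {β : ℝ} (hβ : 0 ≤ β)
    (μ : Measure (Fin n → ℝ)) [IsFiniteMeasure μ] (u : ℝ) :
    charFun ((μ.prod (isingMeasure (Fin n) β (QCW n))).map fun p => √n * sampleCov p.1 p.2) u
      = ∫ p, ∏ i, signCharFun (Real.tanh p.2) (covContrast u p.1 i)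
          ∂μ.prod (curieWeissField β n) := by
  have hcov : Continuous fun p : (Fin n → ℝ) × (Fin n → ℝ) => √n * sampleCov p.1 p.2 :=
    continuous_const.mul continuous_sampleCov
  have hexp : Continuous fun p : (Fin n → ℝ) × (Fin n → ℝ) =>
      Complex.exp (u * (√n * sampleCov p.1 p.2 : ℝ) * Complex.I) := by fun_prop
  have hint : Integrable (fun p : (Fin n → ℝ) × (Fin n → ℝ) =>
      Complex.exp (u * (√n * sampleCov p.1 p.2 : ℝ) * Complex.I))
      (μ.prod (isingMeasure (Fin n) β (QCW n))) :=
    Integrable.of_bound hexp.aestronglyMeasurable 1 (ae_of_all _ fun p => by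
      rw [← Complex.ofReal_mul, Complex.norm_exp_ofReal_mul_I])
  rw [charFun_apply_real, integral_map hcov.aemeasurable (by fun_prop), integral_prod _ hint,
    integral_prod _ (integrable_prod_signCharFun_covContrast u _)]
  refine integral_congr_ae (ae_of_all _ fun x => ?_)
  simp only [← integral_cexp_isingMeasure_QCW hn hβ, sum_covContrast_mul, Fintype.card_fin,
    Complex.ofReal_mul]

lemma integrable_exp_neg_sampleCov {ι : Type*} [Fintype ι] (u : ℝ)
    (μ : Measure ((ι → ℝ) × ℝ)) [IsFiniteMeasure μ] :
    Integrable (fun p => (Real.exp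
      (-((1 - Real.tanh p.2 ^ 2) * (u ^ 2 * sampleCov p.1 p.1) / 2)) : ℂ)) μ := by
  have hcov : Continuous fun p : (ι → ℝ) × ℝ => sampleCov p.1 p.1 :=
    continuous_sampleCov.comp (continuous_fst.prodMk continuous_fst)
  have htanh : Continuous fun p : (ι → ℝ) × ℝ => Real.tanh p.2 :=
    continuous_tanh.comp continuous_snd
  refine Integrable.of_bound (Continuous.aestronglyMeasurable (by fun_prop)) 1
    (ae_of_all _ fun p => ?_)
  rw [Complex.norm_real, Real.norm_of_nonneg (Real.exp_nonneg _), Real.exp_le_one_iff, neg_nonpos]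
  have h₁ : 0 ≤ 1 - Real.tanh p.2 ^ 2 := sub_nonneg.2 (Real.tanh_sq_lt_one _).le
  have h₂ := sampleCov_self_nonneg p.1
  positivity

lemma norm_charFun_sqrt_mul_sampleCov_sub_le {n : ℕ} (hn : n ≠ 0) {β : ℝ} (hβ : 0 ≤ β)
    (μ : Measure (Fin n → ℝ)) [IsProbabilityMeasure μ] {B : ℝ}
    (hx : ∀ᵐ x ∂μ, ∀ i, |x i| ≤ B) (u : ℝ) :
    ‖charFun ((μ.prod (isingMeasure (Fin n) β (QCW n))).map fun p => √n * sampleCov p.1 p.2) u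
        - (∫ p, Real.exp (-((1 - Real.tanh p.2 ^ 2) * (u ^ 2 * sampleCov p.1 p.1) / 2))
            ∂μ.prod (curieWeissField β n) : ℝ)‖
      ≤ 3 * ((2 * B * |u|) ^ 3 / √n) := by
  have : NeZero n := ⟨hn⟩
  rw [charFun_map_sqrt_mul_sampleCov hn hβ, ← integral_complex_ofReal,
    ← integral_sub (integrable_prod_signCharFun_covContrast u _)
      (integrable_exp_neg_sampleCov u _)]
  refine (norm_integral_le_of_norm_le_const ?_).trans_eq (by rw [probReal_univ, mul_one])
  filter_upwards [Measure.quasiMeasurePreserving_fst.ae hx] with p hp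
  refine (sum_covContrast_sq u p.1 ▸ norm_prod_signCharFun_sub_exp_le
    (Real.abs_tanh_lt_one p.2).le (sum_covContrast u p.1)).trans ?_
  have h := sum_abs_covContrast_cubed_le u hp
  rw [Fintype.card_fin] at h
  gcongr

lemma tendsto_integral_exp_neg_sampleCov {β : ℝ} (hβ : 0 ≤ β)
    (μ : (n : ℕ) → Measure (Fin n → ℝ)) [∀ n, IsProbabilityMeasure (μ n)] {v : ℝ}
    (hv : TendstoInProbability (fun n => (μ n).map fun x => sampleCov x x) v) (u : ℝ) :
    Tendsto (fun n => ∫ p, Real.exp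
        (-((1 - Real.tanh p.2 ^ 2) * (u ^ 2 * sampleCov p.1 p.1) / 2))
        ∂(μ n).prod (curieWeissField β n))
      atTop (𝓝 (Real.exp (-(u ^ 2 / 2 * max (v * (1 - isingMag β ^ 2)) 0)))) := by
  have hcov : ∀ n : ℕ, Continuous fun x : Fin n → ℝ => sampleCov x x := fun n =>
    continuous_sampleCov.comp (continuous_id.prodMk continuous_id)
  have htanh : Continuous fun h => Real.tanh h ^ 2 := continuous_tanh.pow 2
  have : ∀ n, IsProbabilityMeasure ((μ n).map fun x => sampleCov x x) := fun n =>
    Measure.isProbabilityMeasure_map (hcov n).aemeasurable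
  have : ∀ n, IsProbabilityMeasure ((curieWeissField β n).map fun h => Real.tanh h ^ 2) :=
    fun n => Measure.isProbabilityMeasure_map htanh.aemeasurable
  have hmul : Continuous fun q : ℝ × ℝ => q.1 * (1 - q.2) := by fun_prop
  have hprob := hv.map_prod (tendstoInProbability_tanh_sq_curieWeissField hβ)
    hmul.measurable hmul.continuousAt
  -- Truncation at `0` makes the test function bounded on all of `ℝ`.
  let f : BoundedContinuousFunction ℝ ℝ := .ofNormedAddCommGroup
    (fun r => Real.exp (-(u ^ 2 / 2 * max r 0))) (by fun_prop) 1 fun r => by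
      rw [Real.norm_of_nonneg (Real.exp_nonneg _), Real.exp_le_one_iff, neg_nonpos]
      positivity
  have : ∀ n, IsProbabilityMeasure ((((μ n).map fun x => sampleCov x x).prod
      ((curieWeissField β n).map fun h => Real.tanh h ^ 2)).map fun q => q.1 * (1 - q.2)) :=
    fun n => Measure.isProbabilityMeasure_map hmul.aemeasurable
  refine (hprob.tendsto_integral f).congr fun n => ?_
  have hmap := (hcov n).measurable.prodMap htanh.measurable
  rw [Measure.map_prod_map _ _ (hcov n).measurable htanh.measurable,
    Measure.map_map hmul.measurable hmap, integral_map (hmul.measurable.comp hmap).aemeasurable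
      f.continuous.aestronglyMeasurable]
  refine integral_congr_ae (ae_of_all _ fun p => ?_)
  have h₁ : 0 ≤ 1 - Real.tanh p.2 ^ 2 := sub_nonneg.2 (Real.tanh_sq_lt_one _).le
  change Real.exp (-(u ^ 2 / 2 * max (sampleCov p.1 p.1 * (1 - Real.tanh p.2 ^ 2)) 0)) = _
  rw [max_eq_left (mul_nonneg (sampleCov_self_nonneg _) h₁)]
  ring_nf

theorem tendstoInDistribution_sqrt_mul_sampleCov {β : ℝ} (hβ : 0 ≤ β)
    (μ : (n : ℕ) → Measure (Fin n → ℝ)) [∀ n, IsProbabilityMeasure (μ n)] {B v : ℝ}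
    (hμ : ∀ n, ∀ᵐ x ∂μ n, ∀ i, |x i| ≤ B)
    (hv : TendstoInProbability (fun n => (μ n).map fun x => sampleCov x x) v) :
    TendstoInDistribution
      (fun n => ((μ n).prod (isingMeasure (Fin n) β (QCW n))).map
        fun p => √n * sampleCov p.1 p.2)
      (gaussianReal 0 (v * (1 - isingMag β ^ 2)).toNNReal) := by
  have : ∀ n, IsProbabilityMeasure (((μ n).prod (isingMeasure (Fin n) β (QCW n))).map
      fun p => √n * sampleCov p.1 p.2) := fun n =>
    Measure.isProbabilityMeasure_map (continuous_const.mul continuous_sampleCov).aemeasurable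
  refine tendstoInDistribution_of_tendsto_charFun fun u => ?_
  have hlim : charFun (gaussianReal 0 (v * (1 - isingMag β ^ 2)).toNNReal) u
      = (Real.exp (-(u ^ 2 / 2 * max (v * (1 - isingMag β ^ 2)) 0)) : ℂ) := by
    rw [charFun_gaussianReal, Real.coe_toNNReal']
    push_cast
    ring_nf
  rw [hlim]
  refine ((Complex.continuous_ofReal.tendsto _).comp
    (tendsto_integral_exp_neg_sampleCov hβ μ hv u)).congr_dist ?_
  have hrate : Tendsto (fun n : ℕ => 3 * ((2 * B * |u|) ^ 3 / √n)) atTop (𝓝 0) := by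
    have hsqrt := Real.tendsto_sqrt_atTop.comp (tendsto_natCast_atTop_atTop (R := ℝ))
    simpa using (hsqrt.const_div_atTop ((2 * B * |u|) ^ 3)).const_mul 3
  refine squeeze_zero' (Eventually.of_forall fun _ => dist_nonneg) ?_ hrate
  filter_upwards [eventually_ne_atTop 0] with n hn
  rw [dist_comm, dist_eq_norm]
  exact norm_charFun_sqrt_mul_sampleCov_sub_le hn hβ (μ n) (hμ n) u

lemma tendstoInProbability_sampleCov_self_of_sq_eq_one (μ : (n : ℕ) → Measure (Fin n → ℝ))
    (hμ : ∀ n, ∀ᵐ x ∂μ n, ∀ i, x i ^ 2 = 1) {c : ℝ}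
    (hc : TendstoInProbability (fun n => (μ n).map fun x => sampleMean x ^ 2) c) :
    TendstoInProbability (fun n => (μ n).map fun x => sampleCov x x) (1 - c) := by
  have hsub : Continuous fun r : ℝ => 1 - r := by fun_prop
  refine fun ε hε => (hc.map hsub.measurable hsub.continuousAt ε hε).congr' ?_
  filter_upwards [eventually_ne_atTop 0] with n hn
  have : NeZero n := ⟨hn⟩
  have hmean := (continuous_sampleMean (ι := Fin n)).measurable
  rw [Measure.map_map hsub.measurable (by fun_prop)]
  congr 1
  refine Measure.map_congr ?_
  filter_upwards [hμ n] with x hx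
  exact (sampleCov_self_of_sq_eq_one hx).symm

theorem general_X_curieWeiss_Y_clt_general {β : ℝ} (hβ : 0 ≤ β)
    (μ : (n : ℕ) → Measure (Fin n → ℝ)) [∀ n, IsProbabilityMeasure (μ n)]
    (hμ : ∀ n, ∀ᵐ x ∂μ n, ∀ i, x i ^ 2 = 1) {c : ℝ}
    (hc : TendstoInProbability (fun n => (μ n).map fun x => sampleMean x ^ 2) c) :
    TendstoInProbability
      (fun n => (μ n).map fun x => (∑ i, (x i - sampleMean x) ^ 2) / (n : ℝ)) (1 - c) ∧
    TendstoInDistribution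
      (fun n => ((μ n).prod (isingMeasure (Fin n) β (QCW n))).map
        fun p => √n * sampleCov p.1 p.2)
      (gaussianReal 0 ((1 - c) * (1 - isingMag β ^ 2)).toNNReal) := by
  have hvar := tendstoInProbability_sampleCov_self_of_sq_eq_one μ hμ hc
  refine ⟨?_, tendstoInDistribution_sqrt_mul_sampleCov hβ μ (B := 1) (fun n => ?_) hvar⟩
  · simpa only [sampleCov_self, Fintype.card_fin] using hvar
  · filter_upwards [hμ n] with x hx i
    exact (sq_le_one_iff_abs_le_one _).1 (hx i).le

/-- **(General `X`, Curie–Weiss `Y`).** If `X ~ P_{β₁,Qₙ}` satisfies `X̄ₙ² → m₁²` in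
probability (`m₁ ∈ [0,1)`) and `Y ~ P_{β₂,Q^{CW}}` is an independent Curie–Weiss vector, then
`(1/n) Σᵢ (Xᵢ - X̄ₙ)² → 1 - m₁²` in probability and
`√n Tₙ →d N(0, (1-m₁²)(1-m(β₂)²))`. -/
theorem general_X_curieWeiss_Y_clt (β₁ β₂ : ℝ) (hβ₁ : 0 ≤ β₁) (hβ₂ : 0 ≤ β₂)
    (Q : (n : ℕ) → Matrix (Fin n) (Fin n) ℝ)
    (hsym : ∀ n, (Q n).IsSymm) (hdiag : ∀ n i, Q n i i = 0)
    (m₁ : ℝ) (hm₁ : 0 ≤ m₁) (hm₁' : m₁ < 1)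
    (hmeansq : TendstoInProbability
      (fun n => Measure.map (fun x : Fin n → ℝ => sampleMean x ^ 2)
        (isingMeasure (Fin n) β₁ (Q n)))
      (m₁ ^ 2)) :
    TendstoInProbability
      (fun n => Measure.map (fun x : Fin n → ℝ => (∑ i, (x i - sampleMean x) ^ 2) / (n : ℝ))
        (isingMeasure (Fin n) β₁ (Q n)))
      (1 - m₁ ^ 2) ∧
    TendstoInDistribution
      (fun n => Measure.map
        (fun p : (Fin n → ℝ) × (Fin n → ℝ) => Real.sqrt n * sampleCov p.1 p.2)
        ((isingMeasure (Fin n) β₁ (Q n)).prod (isingMeasure (Fin n) β₂ (QCW n))))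
      (gaussianReal 0 (Real.toNNReal ((1 - m₁ ^ 2) * (1 - isingMag β₂ ^ 2)))) :=
  general_X_curieWeiss_Y_clt_general hβ₂ _ (fun n => isingMeasure_ae_sq_eq_one β₁ (Q n)) hmeansq

end
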